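/- Let 1 ≤ p ≤ ∞ and let 0 ≤ s ≤ t be real numbers. Then there exists a constant C > 0 such that ‖J_{−s} φ‖_p ≤ C ‖J_{−t} φ‖_p for all φ ∈ 𝒮(ℝⁿ). (Monotonicity of the Bessel-potential seminorms on 𝒟_{L^p}, corresponding to the continuous inclusions of the local Banach spaces.) -/

import Mathlib

open MeasureTheory Complex
open scoped FourierTransform ENNReal SchwartzMap

/-- The Bessel potential `J_z f = 𝓕⁻¹((1+|ξ|²)^(-z/2) · 𝓕 f)` of a function on `ℝⁿ`. -/
noncomputable def besselPotential (n : ℕ) (z : ℂ)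
    (f : EuclideanSpace ℝ (Fin n) → ℂ) : EuclideanSpace ℝ (Fin n) → ℂ :=
  𝓕⁻ (fun ξ => ((1 : ℂ) + (‖ξ‖ : ℂ) ^ 2) ^ (-z / 2) * 𝓕 f ξ)

/-!
For `r > 0` the symbol `(1 + ‖ξ‖²) ^ (-r / 2)` is, up to the factor `2π` in the frequency, the
characteristic function of a probability measure: conditionally on its variance `V`, a centred
isotropic Gaussian vector has characteristic function `exp (-V ‖ξ‖² / 2)`, and averaging this over
a gamma-distributed `V` gives a negative power of an affine function of `‖ξ‖²`. Hence
`J_{z + r} f` is an average of translates of `J_z f`, and by Jensen's inequality such an average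
does not increase any `L^p` norm with `p ≥ 1`.
-/

section Averaging

variable {E : Type*} [NormedAddCommGroup E] [NormedSpace ℝ E] {p : ℝ≥0∞}

theorem enorm_integral_le_eLpNorm {α : Type*} [MeasurableSpace α] {μ : Measure α}
    [IsProbabilityMeasure μ] {f : α → E} (hf : AEStronglyMeasurable f μ) (hp : 1 ≤ p) :
    ‖∫ a, f a ∂μ‖ₑ ≤ eLpNorm f p μ :=
  calc ‖∫ a, f a ∂μ‖ₑ ≤ ∫⁻ a, ‖f a‖ₑ ∂μ := enorm_integral_le_lintegral_enorm f
    _ = eLpNorm f 1 μ := eLpNorm_one_eq_lintegral_enorm.symm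
    _ ≤ eLpNorm f p μ := eLpNorm_le_eLpNorm_of_exponent_le hp hf

theorem eLpNorm_integral_prod_right_le {α β : Type*} [MeasurableSpace α] [MeasurableSpace β]
    {ν : Measure α} {μ : Measure β} [IsProbabilityMeasure μ] {f : α × β → E}
    (hf : AEStronglyMeasurable f (ν.prod μ)) (hp : 1 ≤ p) :
    eLpNorm (fun x => ∫ y, f (x, y) ∂μ) p ν ≤ eLpNorm f p (ν.prod μ) := by
  have hp_pos : p ≠ 0 := (zero_lt_one.trans_le hp).ne'
  have jensen : ∀ᵐ x ∂ν, ‖∫ y, f (x, y) ∂μ‖ₑ ≤ eLpNorm (fun y => f (x, y)) p μ :=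
    hf.prodMk_left.mono fun x hx => enorm_integral_le_eLpNorm hx hp
  rcases eq_or_ne p ∞ with rfl | hp_top
  · simp only [eLpNorm_exponent_top] at jensen ⊢
    refine eLpNormEssSup_le_of_ae_enorm_bound ?_
    filter_upwards [jensen, Measure.ae_ae_of_ae_prod
      (ae_le_eLpNormEssSup (f := f) (μ := ν.prod μ))]
      with x hx hbound
    exact hx.trans (eLpNormEssSup_le_of_ae_enorm_bound hbound)
  · have hp_toReal : 0 < p.toReal := ENNReal.toReal_pos hp_pos hp_top
    simp only [eLpNorm_eq_lintegral_rpow_enorm_toReal hp_pos hp_top, one_div] at jensen ⊢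
    rw [lintegral_prod _ (hf.enorm.pow_const _)]
    refine ENNReal.rpow_le_rpow (lintegral_mono_ae ?_) (by positivity)
    exact jensen.mono fun x hx => (ENNReal.le_rpow_inv_iff hp_toReal).1 hx

theorem measurePreserving_add_of_isProbabilityMeasure {G : Type*} [AddGroup G] [MeasurableSpace G]
    [MeasurableAdd₂ G] (ν μ : Measure G) [SFinite ν] [ν.IsAddRightInvariant]
    [IsProbabilityMeasure μ] :
    MeasurePreserving (fun q : G × G => q.1 + q.2) (ν.prod μ) ν :=
  measurePreserving_fst.comp (measurePreserving_add_prod ν μ)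

theorem eLpNorm_integral_translate_le {G : Type*} [AddGroup G] [MeasurableSpace G]
    [MeasurableAdd₂ G] {ν μ : Measure G} [SFinite ν] [ν.IsAddRightInvariant]
    [IsProbabilityMeasure μ] {f : G → E} (hf : AEStronglyMeasurable f ν) (hp : 1 ≤ p) :
    eLpNorm (fun x => ∫ y, f (x + y) ∂μ) p ν ≤ eLpNorm f p ν := by
  have hadd := measurePreserving_add_of_isProbabilityMeasure ν μ
  calc eLpNorm (fun x => ∫ y, f (x + y) ∂μ) p ν
      ≤ eLpNorm (f ∘ fun q : G × G => q.1 + q.2) p (ν.prod μ) :=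
        eLpNorm_integral_prod_right_le (f := f ∘ fun q : G × G => q.1 + q.2)
          (hf.comp_measurePreserving hadd) hp
    _ = eLpNorm f p ν := eLpNorm_comp_measurePreserving hf hadd

end Averaging

section Fourier

variable {E F : Type*} [NormedAddCommGroup E] [InnerProductSpace ℝ E] [FiniteDimensional ℝ E]
  [MeasurableSpace E] [BorelSpace E] [NormedAddCommGroup F] [NormedSpace ℂ F]

theorem continuous_fourierInv_of_integrable {g : E → F} (hg : Integrable g) :
    Continuous (𝓕⁻ g) :=
  VectorFourier.fourierIntegral_continuous Real.continuous_fourierChar continuous_inner.neg hg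

theorem fourierInv_charFun_smul [CompleteSpace F] (μ : Measure E) [IsFiniteMeasure μ] {g : E → F}
    (hg : Integrable g) (x : E) :
    𝓕⁻ (fun ξ => charFun μ ((2 * Real.pi) • ξ) • g ξ) x = ∫ y, 𝓕⁻ g (x + y) ∂μ := by
  let e (ξ y : E) : ℂ := cexp (↑(2 * Real.pi * inner ℝ ξ y) * I)
  have e_add (ξ y : E) : e ξ (x + y) = e ξ y * e ξ x := by
    simp only [e, ← Complex.exp_add, inner_add_right]
    push_cast
    ring_nf
  have charFun_eq (ξ : E) : charFun μ ((2 * Real.pi) • ξ) = ∫ y, e ξ y ∂μ := by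
    simp only [charFun_apply, e, inner_smul_right, real_inner_comm ξ]
  have hintegrable : Integrable (fun q : E × E => e q.2 (x + q.1) • g q.2) (μ.prod volume) := by
    refine (hg.comp_snd μ).bdd_smul (𝕜 := ℂ) 1 ?_ (.of_forall fun q => ?_)
    · exact Continuous.aestronglyMeasurable (by fun_prop)
    · exact (Complex.norm_exp_ofReal_mul_I _).le
  calc 𝓕⁻ (fun ξ => charFun μ ((2 * Real.pi) • ξ) • g ξ) x
      = ∫ ξ, e ξ x • (∫ y, e ξ y ∂μ) • g ξ := by
        simp only [Real.fourierInv_eq', charFun_eq, e]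
    _ = ∫ ξ, ∫ y, e ξ (x + y) • g ξ ∂μ := by
        simp only [e_add, mul_comm _ (e _ x), mul_smul, integral_smul, integral_smul_const]
    _ = ∫ y, (∫ ξ, e ξ (x + y) • g ξ) ∂μ := (integral_integral_swap hintegrable).symm
    _ = ∫ y, 𝓕⁻ g (x + y) ∂μ := by simp only [Real.fourierInv_eq', e]

end Fourier

section GammaDistribution

open ProbabilityTheory

theorem ae_nonneg_gammaMeasure (a b : ℝ) : ∀ᵐ x ∂gammaMeasure a b, 0 ≤ x := by
  have hmeas : Measurable (gammaPDF a b) := (measurable_gammaPDFReal a b).ennreal_ofReal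
  refine (ae_withDensity_iff hmeas).2 (.of_forall fun x hx => ?_)
  contrapose! hx
  exact gammaPDF_of_neg hx

theorem integral_gammaPDFReal {a b : ℝ} (ha : 0 < a) (hb : 0 < b) :
    ∫ x, gammaPDFReal a b x = 1 := by
  rw [integral_eq_lintegral_of_nonneg_ae (.of_forall (gammaPDFReal_nonneg ha hb)) (by fun_prop)]
  exact congrArg ENNReal.toReal (lintegral_gammaPDF_eq_one ha hb)

theorem gammaPDFReal_mul_exp {a b t : ℝ} (hb : 0 < b) (ht : t < b) (x : ℝ) :
    gammaPDFReal a b x * Real.exp (t * x) = (b / (b - t)) ^ a * gammaPDFReal a (b - t) x := by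
  have hbt : 0 < b - t := sub_pos.2 ht
  have hexp : Real.exp (-((b - t) * x)) = Real.exp (-(b * x)) * Real.exp (t * x) := by
    rw [← Real.exp_add]
    ring_nf
  have hpow : (b - t) ^ a ≠ 0 := (Real.rpow_pos_of_pos hbt a).ne'
  unfold gammaPDFReal
  split_ifs
  · rw [hexp, Real.div_rpow hb.le hbt.le]
    field_simp
  · simp only [zero_mul, mul_zero]

theorem mgf_id_gammaMeasure {a b t : ℝ} (ha : 0 < a) (hb : 0 < b) (ht : t < b) :
    mgf id (gammaMeasure a b) t = (b / (b - t)) ^ a := by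
  have hmeas : Measurable (gammaPDF a b) := (measurable_gammaPDFReal a b).ennreal_ofReal
  have toReal_gammaPDF (x : ℝ) : (gammaPDF a b x).toReal = gammaPDFReal a b x :=
    ENNReal.toReal_ofReal (gammaPDFReal_nonneg ha hb x)
  calc mgf id (gammaMeasure a b) t
      = ∫ x, (gammaPDF a b x).toReal • Real.exp (t * x) :=
        integral_withDensity_eq_integral_toReal_smul hmeas
          (.of_forall fun _ => ENNReal.ofReal_lt_top) _
    _ = ∫ x, (b / (b - t)) ^ a * gammaPDFReal a (b - t) x := by
        simp only [toReal_gammaPDF, smul_eq_mul, gammaPDFReal_mul_exp hb ht]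
    _ = (b / (b - t)) ^ a := by
        rw [integral_const_mul, integral_gammaPDFReal ha (sub_pos.2 ht), mul_one]

end GammaDistribution

section BesselMeasure

open ProbabilityTheory

variable (E : Type*) [NormedAddCommGroup E] [InnerProductSpace ℝ E] [FiniteDimensional ℝ E]
  [MeasurableSpace E]

/-- The Gaussian scale mixture with variance distribution `ρ`: the law of `√V • Z`, where `V` has
law `ρ` and `Z` is an independent standard Gaussian vector. Since `√v = 0` for `v < 0`, this is
meaningful only for `ρ` concentrated on `[0, ∞)`. -/
noncomputable def gaussianScaleMixture (ρ : Measure ℝ) : Measure E :=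
  (ρ.prod (stdGaussian E)).map fun q => √q.1 • q.2

/-- The Bessel measure of order `r > 0`: the probability measure whose density is the Bessel kernel
`G_r`, the inverse Fourier transform of `(1 + ‖ξ‖²) ^ (-r / 2)`. It is encoded as a Gaussian scale
mixture; the rate `2π²` of the gamma law accounts for the `2π` in the Fourier character. -/
noncomputable def besselMeasure (r : ℝ) : Measure E :=
  gaussianScaleMixture E (gammaMeasure (r / 2) (2 * Real.pi ^ 2))

variable {E} [BorelSpace E]

instance isProbabilityMeasure_gaussianScaleMixture (ρ : Measure ℝ) [IsProbabilityMeasure ρ] :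
    IsProbabilityMeasure (gaussianScaleMixture E ρ) :=
  Measure.isProbabilityMeasure_map (by fun_prop)

theorem charFun_gaussianScaleMixture {ρ : Measure ℝ} [IsFiniteMeasure ρ]
    (hρ : ∀ᵐ v ∂ρ, 0 ≤ v) (ξ : E) :
    charFun (gaussianScaleMixture E ρ) ξ = mgf id ρ (-(‖ξ‖ ^ 2 / 2)) := by
  have hintegrable : Integrable (fun q : ℝ × E => cexp (inner ℝ (√q.1 • q.2) ξ * I))
      (ρ.prod (stdGaussian E)) := by
    refine .of_bound (by fun_prop) 1 (.of_forall fun q => ?_)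
    exact (Complex.norm_exp_ofReal_mul_I _).le
  have conditional_charFun {v : ℝ} (hv : 0 ≤ v) :
      ∫ z, cexp (inner ℝ (√v • z) ξ * I) ∂stdGaussian E =
        (Real.exp (-(‖ξ‖ ^ 2 / 2) * v) : ℂ) := by
    have h := charFun_stdGaussian (√v • ξ)
    simp only [charFun_apply, real_inner_smul_right, norm_smul,
      Real.norm_of_nonneg (Real.sqrt_nonneg v)] at h
    simp only [real_inner_smul_left, h]
    norm_cast
    rw [mul_pow, Real.sq_sqrt hv]
    ring_nf
  rw [charFun_apply, gaussianScaleMixture, integral_map (by fun_prop) (by fun_prop),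
    integral_prod _ hintegrable, mgf, ← integral_complex_ofReal]
  exact integral_congr_ae (hρ.mono fun v => conditional_charFun)

theorem isProbabilityMeasure_besselMeasure {r : ℝ} (hr : 0 < r) :
    IsProbabilityMeasure (besselMeasure E r) :=
  have := isProbabilityMeasure_gammaMeasure (half_pos hr) (r := 2 * Real.pi ^ 2) (by positivity)
  isProbabilityMeasure_gaussianScaleMixture _

theorem charFun_besselMeasure {r : ℝ} (hr : 0 < r) (ξ : E) :
    charFun (besselMeasure E r) ((2 * Real.pi) • ξ) =
      ((1 : ℂ) + (‖ξ‖ : ℂ) ^ 2) ^ (-(r : ℂ) / 2) := by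
  have hrate : 0 < 2 * Real.pi ^ 2 := by positivity
  have := isProbabilityMeasure_gammaMeasure (half_pos hr) hrate
  have hnorm : ‖(2 * Real.pi) • ξ‖ ^ 2 / 2 = 2 * Real.pi ^ 2 * ‖ξ‖ ^ 2 := by
    rw [norm_smul, Real.norm_of_nonneg Real.two_pi_pos.le]
    ring
  have hratio : 2 * Real.pi ^ 2 / (2 * Real.pi ^ 2 - -(2 * Real.pi ^ 2 * ‖ξ‖ ^ 2)) =
      (1 + ‖ξ‖ ^ 2)⁻¹ := by
    rw [sub_neg_eq_add, ← mul_one_add, ← div_div, div_self hrate.ne', one_div]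
  rw [besselMeasure, charFun_gaussianScaleMixture (ae_nonneg_gammaMeasure _ _), hnorm,
    mgf_id_gammaMeasure (half_pos hr) hrate (by nlinarith [sq_nonneg ‖ξ‖]), hratio,
    Real.inv_rpow (by positivity), ← Real.rpow_neg (by positivity),
    Complex.ofReal_cpow (by positivity)]
  push_cast
  rw [neg_div]

end BesselMeasure

section BesselPotential

theorem one_add_norm_sq_cpow_add {E : Type*} [SeminormedAddCommGroup E] (ξ : E) (z w : ℂ) :
    ((1 : ℂ) + (‖ξ‖ : ℂ) ^ 2) ^ (z + w) =
      ((1 : ℂ) + (‖ξ‖ : ℂ) ^ 2) ^ z * ((1 : ℂ) + (‖ξ‖ : ℂ) ^ 2) ^ w :=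
  Complex.cpow_add _ _ (mod_cast (by positivity : (1 : ℝ) + ‖ξ‖ ^ 2 ≠ 0))

theorem integrable_one_add_norm_sq_cpow_smul {E F : Type*} [NormedAddCommGroup E]
    [InnerProductSpace ℝ E] [MeasurableSpace E] [BorelSpace E] [SecondCountableTopology E]
    [NormedAddCommGroup F] [NormedSpace ℂ F] {μ : Measure E} [μ.HasTemperateGrowth]
    (w : ℂ) (ψ : 𝓢(E, F)) :
    Integrable (fun ξ => ((1 : ℂ) + (‖ξ‖ : ℂ) ^ 2) ^ w • ψ ξ) μ := by
  have hgrowth := Function.hasTemperateGrowth_one_add_norm_sq_rpow E w.re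
  let g : 𝓢(E, F) := SchwartzMap.smulLeftCLM F (fun ξ : E => (1 + ‖ξ‖ ^ 2) ^ w.re) ψ
  refine (g.integrable (μ := μ)).mono ?_ (.of_forall fun ξ => ?_)
  · exact AEStronglyMeasurable.smul (Measurable.aestronglyMeasurable (by fun_prop))
      ψ.continuous.aestronglyMeasurable
  · have hpos : 0 < 1 + ‖ξ‖ ^ 2 := zero_lt_one_add_norm_sq ξ
    have hnorm := Complex.norm_cpow_eq_rpow_re_of_pos hpos w
    push_cast at hnorm
    rw [SchwartzMap.smulLeftCLM_apply_apply hgrowth, norm_smul, norm_smul, hnorm,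
      Real.norm_of_nonneg (Real.rpow_nonneg hpos.le _)]

variable {n : ℕ} {f : EuclideanSpace ℝ (Fin n) → ℂ} {z : ℂ}

theorem besselPotential_add_eq_integral_translate
    (hf : Integrable fun ξ => ((1 : ℂ) + (‖ξ‖ : ℂ) ^ 2) ^ (-z / 2) * 𝓕 f ξ) {r : ℝ} (hr : 0 < r)
    (x : EuclideanSpace ℝ (Fin n)) :
    besselPotential n (z + r) f x = ∫ y, besselPotential n z f (x + y) ∂besselMeasure _ r := by
  have := isProbabilityMeasure_besselMeasure (E := EuclideanSpace ℝ (Fin n)) hr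
  have hexponent : -(z + r) / 2 = -(r : ℂ) / 2 + -z / 2 := by ring
  simp only [besselPotential, ← fourierInv_charFun_smul _ hf, charFun_besselMeasure hr, smul_eq_mul,
    hexponent, one_add_norm_sq_cpow_add, mul_assoc]

theorem eLpNorm_besselPotential_add_le
    (hf : Integrable fun ξ => ((1 : ℂ) + (‖ξ‖ : ℂ) ^ 2) ^ (-z / 2) * 𝓕 f ξ) {r : ℝ} (hr : 0 ≤ r)
    {p : ℝ≥0∞} (hp : 1 ≤ p) :
    eLpNorm (besselPotential n (z + r) f) p ≤ eLpNorm (besselPotential n z f) p := by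
  rcases hr.eq_or_lt with rfl | hr_pos
  · rw [Complex.ofReal_zero, add_zero]
  · have := isProbabilityMeasure_besselMeasure (E := EuclideanSpace ℝ (Fin n)) hr_pos
    have hcont : Continuous (besselPotential n z f) := continuous_fourierInv_of_integrable hf
    simpa only [← besselPotential_add_eq_integral_translate hf hr_pos] using
      eLpNorm_integral_translate_le (μ := besselMeasure _ r) hcont.aestronglyMeasurable hp

theorem besselPotential_seminorm_mono_general (n : ℕ) {p : ℝ≥0∞} (hp : 1 ≤ p) (z : ℂ) {r : ℝ}
    (hr : 0 ≤ r) (φ : 𝓢(EuclideanSpace ℝ (Fin n), ℂ)) :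
    eLpNorm (besselPotential n (z + r) φ) p ≤ eLpNorm (besselPotential n z φ) p :=
  eLpNorm_besselPotential_add_le
    (by simpa only [SchwartzMap.fourier_coe, smul_eq_mul] using
      integrable_one_add_norm_sq_cpow_smul (-z / 2) (𝓕 φ)) hr hp

end BesselPotential

/-- Monotonicity of the Bessel-potential seminorms: for `1 ≤ p ≤ ∞` and `0 ≤ s ≤ t`,
`‖J_{-s} φ‖_p ≤ C ‖J_{-t} φ‖_p` for all Schwartz `φ`. -/
theorem besselPotential_seminorm_mono (n : ℕ) (p : ℝ≥0∞) (hp : 1 ≤ p)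
    (s t : ℝ) (hs : 0 ≤ s) (hst : s ≤ t) :
    ∃ C : ℝ, 0 < C ∧ ∀ φ : 𝓢(EuclideanSpace ℝ (Fin n), ℂ),
      eLpNorm (besselPotential n (-(s : ℂ)) ⇑φ) p volume ≤
        ENNReal.ofReal C * eLpNorm (besselPotential n (-(t : ℂ)) ⇑φ) p volume :=
  ⟨1, one_pos, fun φ => by
    simpa [neg_add_eq_sub] using
      besselPotential_seminorm_mono_general n hp (-t) (sub_nonneg.2 hst) φ⟩
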